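/- Let F be a totally real number field of degree r over ℚ, with real embeddings σ₁, …, σ_r : F → ℝ, and let δ ∈ 𝓞_F be a generator of the different ideal of F/ℚ. Let D_F > 0 denote the discriminant of F (positive since F is totally real). Then for every tuple z = (z₁,…,z_r) with Im(z_j) > 0 for all j, the theta series satisfies the transformation formula θ_F(z) = (∏_{j=1}^r (-i z_j)^{-1/2}) · D_F^{-1/2} · θ_F(w), where w = (w₁,…,w_r) with w_j = -1/(σ_j(δ)² z_j) (which again satisfies Im(w_j) > 0), and each power (-i z_j)^{-1/2} is the principal branch of the complex power. -/

import Mathlib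

open Complex NumberField

lemma aux_summable_pi (r : ℕ) (g : ℤ → ℝ) (hg0 : ∀ n, 0 ≤ g n) (hg : Summable g) :
    Summable fun n : Fin r → ℤ => ∏ i, g (n i) := by
  induction r with
  | zero => exact Summable.of_finite
  | succ r ih =>
    rw [← (Fin.consEquiv (fun _ : Fin (r+1) => ℤ)).summable_iff]
    have := hg.mul_of_nonneg ih hg0 (fun n => Finset.prod_nonneg fun i _ => hg0 _)
    refine this.congr fun p => ?_
    simp [Fin.consEquiv, Fin.prod_univ_succ]

lemma aux_isQuot (r : ℕ) : Topology.IsQuotientMap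
    (fun (x : Fin r → ℝ) (i : Fin r) => ((x i : ℝ) : UnitAddCircle)) := by
  have : IsOpenQuotientMap (Pi.map (fun (_ : Fin r) (x : ℝ) => (x : UnitAddCircle))) :=
    IsOpenQuotientMap.piMap fun i => QuotientAddGroup.isOpenQuotientMap_mk
  exact this.isQuotientMap

lemma aux_unfold {r : ℕ} (F : (Fin r → ℝ) → ℂ) (hF : MeasureTheory.Integrable F) :
    HasSum (fun n : Fin r → ℤ => ∫ x in {x : Fin r → ℝ | ∀ i, x i ∈ Set.Ioc (0:ℝ) (0 + 1)},
      F (x + fun i => (n i : ℝ))) (∫ x, F x) := by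
  set S : Set (Fin r → ℝ) := {x : Fin r → ℝ | ∀ i, x i ∈ Set.Ioc (0:ℝ) (0 + 1)} with hS
  have hSm : MeasurableSet S := MeasurableSet.univ_pi' (fun i => measurableSet_Ioc)
  let s : (Fin r → ℤ) → Set (Fin r → ℝ) := fun n => (fun x => x - fun i => (n i : ℝ)) ⁻¹' S
  have hsm : ∀ n, MeasurableSet (s n) := fun n => (measurable_id.sub_const _) hSm
  have hmem : ∀ n x, x ∈ s n ↔ ∀ i, n i = ⌈x i⌉ - 1 := by
    intro n x
    simp only [s, hS, Set.mem_preimage, Set.mem_ofPred_eq, Pi.sub_apply, Set.mem_Ioc]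
    refine forall_congr' fun i => ?_
    rw [eq_sub_iff_add_eq, eq_comm, Int.ceil_eq_iff]
    push_cast
    constructor <;> rintro ⟨h1, h2⟩ <;> constructor <;> linarith
  have hdis : Pairwise (Function.onFun Disjoint s) := by
    intro m n hmn
    rw [Function.onFun, Set.disjoint_left]
    intro x hx hx'
    rw [hmem] at hx hx'
    exact hmn (funext fun i => (hx i).trans (hx' i).symm)
  have hun : (⋃ n, s n) = Set.univ := by
    ext x
    simp only [Set.mem_iUnion, Set.mem_univ, iff_true]
    exact ⟨fun i => ⌈x i⌉ - 1, (hmem _ _).2 fun i => rfl⟩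
  have := MeasureTheory.hasSum_integral_iUnion (μ := MeasureTheory.volume) (f := F) hsm hdis hF.integrableOn
  rw [hun, MeasureTheory.setIntegral_univ] at this
  refine Eq.mp (congrArg (fun φ => HasSum φ _) (funext fun n => ?_)) this
  have h := (MeasureTheory.measurePreserving_add_right MeasureTheory.volume (fun i => (n i : ℝ))
    ).setIntegral_preimage_emb (MeasurableEquiv.addRight _).measurableEmbedding F (s n)
  rw [← h]
  symm
  congr 2
  ext x
  simp [s]

theorem aux_poisson {r : ℕ} (f : (Fin r → ℝ) → ℂ) (hf : Continuous f)
    (hint : MeasureTheory.Integrable f)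
    (hb : ∀ R : ℝ, ∃ u : (Fin r → ℤ) → ℝ, Summable u ∧ ∀ x : Fin r → ℝ, ‖x‖ ≤ R →
      ∀ n, ‖f (x + fun i => (n i : ℝ))‖ ≤ u n)
    (hs : Summable fun m : Fin r → ℤ => ∫ x : Fin r → ℝ,
      cexp (∑ i, -(2 * Real.pi * I * m i) * x i) * f x) :
    ∑' n : Fin r → ℤ, f (fun i => (n i : ℝ)) = ∑' m : Fin r → ℤ, ∫ x : Fin r → ℝ,
      cexp (∑ i, -(2 * Real.pi * I * m i) * x i) * f x := by
  set G : (Fin r → ℝ) → ℂ := fun x => ∑' n : Fin r → ℤ, f (x + fun i => (n i : ℝ)) with hG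
  have hGc : Continuous G := by
    rw [continuous_iff_continuousAt]
    intro x
    obtain ⟨u, hu, hfu⟩ := hb (‖x‖ + 1)
    have : ContinuousOn G (Metric.closedBall 0 (‖x‖ + 1)) :=
      continuousOn_tsum (fun n => (hf.comp (by fun_prop)).continuousOn) hu
        (fun n y hy => hfu y (by simpa using hy) n)
    refine this.continuousAt (Metric.closedBall_mem_nhds_of_mem ?_)
    simp
  have hper : ∀ (x : Fin r → ℝ) (k : Fin r → ℤ), G (x + fun i => (k i : ℝ)) = G x := by
    intro x k
    simp only [hG]
    rw [← (Equiv.addLeft k).tsum_eq (fun n : Fin r → ℤ => f (x + fun i => (n i : ℝ)))]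
    refine tsum_congr fun n => ?_
    congr 1
    ext i
    simp [add_assoc]
  have hfac : Function.FactorsThrough G
      (fun (x : Fin r → ℝ) (i : Fin r) => ((x i : ℝ) : UnitAddCircle)) := by
    intro x y hxy
    have : ∀ i, ∃ k : ℤ, y i = x i + k := by
      intro i
      have h : ((x i : ℝ) : UnitAddCircle) = (y i : ℝ) := congrFun hxy i
      obtain ⟨k, hk⟩ := AddSubgroup.mem_zmultiples_iff.mp
        ((QuotientAddGroup.eq (s := AddSubgroup.zmultiples (1:ℝ))).mp h)
      refine ⟨k, ?_⟩
      simp only [zsmul_eq_mul, mul_one] at hk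
      rw [hk]; ring
    choose k hk using this
    have : y = x + fun i => (k i : ℝ) := funext hk
    simp [this, hper]
  let g : C(UnitAddTorus (Fin r), ℂ) := (Topology.IsQuotientMap.lift (f := ⟨fun (x : Fin r → ℝ)
      (i : Fin r) => ((x i : ℝ) : UnitAddCircle), (aux_isQuot r).continuous⟩) (aux_isQuot r)
      ⟨G, hGc⟩ hfac)
  have hg : ∀ x : Fin r → ℝ, g (fun i => (x i : UnitAddCircle)) = G x := fun x => by
    exact DFunLike.congr_fun (Topology.IsQuotientMap.lift_comp (f := ⟨fun (x : Fin r → ℝ)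
      (i : Fin r) => ((x i : ℝ) : UnitAddCircle), (aux_isQuot r).continuous⟩) (aux_isQuot r)
      ⟨G, hGc⟩ hfac) x
  have hE : ∀ (m : Fin r → ℤ) (x : Fin r → ℝ), UnitAddTorus.mFourier (-m) (fun i => (x i : UnitAddCircle))
      = cexp (∑ i, -(2 * Real.pi * I * m i) * x i) := by
    intro m x
    simp only [UnitAddTorus.mFourier, ContinuousMap.coe_mk, fourier_coe_apply, Complex.exp_sum]
    refine Finset.prod_congr rfl fun i _ => ?_
    congr 1
    simp
  have hcoef : ∀ m, UnitAddTorus.mFourierCoeff g m = ∫ x : Fin r → ℝ,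
      cexp (∑ i, -(2 * Real.pi * I * m i) * x i) * f x := by
    intro m
    rw [UnitAddTorus.mFourierCoeff_eq_integral g m (fun _ => 0)]
    simp only [hg, hE, smul_eq_mul]
    set S : Set (Fin r → ℝ) := {x : Fin r → ℝ | ∀ i, x i ∈ Set.Ioc (0:ℝ) (0 + 1)} with hS
    have hSm : MeasurableSet S := MeasurableSet.univ_pi' (fun i => measurableSet_Ioc)
    have hnE : ∀ x : Fin r → ℝ, ‖cexp (∑ i, -(2 * Real.pi * I * m i) * x i)‖ = 1 := by
      intro x
      rw [Complex.norm_exp]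
      simp
    have hint' : MeasureTheory.Integrable (fun x : Fin r → ℝ =>
        cexp (∑ i, -(2 * Real.pi * I * m i) * x i) * f x) := by
      refine hint.bdd_mul (c := 1) ?_ ?_
      · exact Continuous.aestronglyMeasurable (by fun_prop)
      · exact Filter.Eventually.of_forall fun x => (hnE x).le
    have h1 := aux_unfold _ hint'
    have hSE : ∀ (n : Fin r → ℤ) (x : Fin r → ℝ),
        cexp (∑ i, -(2 * Real.pi * I * m i) * ((x + fun i => (n i : ℝ)) i : ℝ)) =
        cexp (∑ i, -(2 * Real.pi * I * m i) * x i) := by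
      intro n x
      rw [← hE, ← hE]
      congr 1
      ext i
      simp
    simp only [hSE] at h1
    obtain ⟨u, hu, hfu⟩ := hb 1
    have hS1 : ∀ x ∈ S, ‖x‖ ≤ 1 := by
      intro x hx
      refine (pi_norm_le_iff_of_nonneg zero_le_one).2 fun i => ?_
      have := hx i
      simp only [zero_add, Set.mem_Ioc] at this
      rw [Real.norm_eq_abs, abs_le]
      constructor <;> linarith
    have hSv : MeasureTheory.volume S < ⊤ :=
      (MeasureTheory.measure_mono (fun x hx => mem_closedBall_zero_iff.2 (hS1 x hx))).trans_lt
        (MeasureTheory.measure_closedBall_lt_top (x := (0 : Fin r → ℝ)) (r := 1))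
    have : MeasureTheory.IsFiniteMeasure (MeasureTheory.volume.restrict S) :=
      MeasureTheory.isFiniteMeasure_restrict.2 hSv.ne
    have h2 := MeasureTheory.hasSum_integral_of_summable_integral_norm
      (μ := MeasureTheory.volume.restrict S)
      (F := fun (n : Fin r → ℤ) (x : Fin r → ℝ) =>
        cexp (∑ i, -(2 * Real.pi * I * m i) * x i) * f (x + fun i => (n i : ℝ))) ?_ ?_
    · rw [h1.unique h2]
      simp only [hG, tsum_mul_left]
    · intro n
      refine (((hint.comp_add_right (fun i => (n i : ℝ))).bdd_mul (c := 1) ?_ ?_)).integrableOn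
      · exact Continuous.aestronglyMeasurable (by fun_prop)
      · exact Filter.Eventually.of_forall fun x => (hnE x).le
    · simp only [norm_mul, hnE, one_mul]
      refine Summable.of_nonneg_of_le (fun n => MeasureTheory.integral_nonneg fun x => norm_nonneg _)
        (fun n => ?_) (hu.mul_left (MeasureTheory.volume.real S))
      refine (MeasureTheory.integral_mono_ae (g := fun _ => u n) ?_ ?_ ?_).trans ?_
      · exact (hint.comp_add_right (fun i => (n i : ℝ))).norm.integrableOn
      · exact MeasureTheory.integrable_const _
      · filter_upwards [MeasureTheory.ae_restrict_mem hSm] with x hx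
        exact hfu x (hS1 x hx) n
      · simp
  have key := UnitAddTorus.hasSum_mFourier_series_apply_of_summable (f := g)
    (by simpa only [hcoef, funext hcoef] using hs) (fun i => ((0 : ℝ) : UnitAddCircle))
  rw [hg (fun _ => 0)] at key
  have h0 : ∀ m : Fin r → ℤ,
      UnitAddTorus.mFourier m (fun _ => ((0 : ℝ) : UnitAddCircle)) = 1 := by
    intro m
    have := hE (-m) (fun _ => 0)
    simpa using this
  simp only [h0, hcoef, smul_eq_mul, mul_one] at key
  rw [key.tsum_eq]
  simp only [hG]
  refine tsum_congr fun n => ?_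
  congr 1
  ext i
  simp

lemma aux_posdef {r : ℕ} (A : Matrix (Fin r) (Fin r) ℝ) (hA : A.det ≠ 0) (y : Fin r → ℝ)
    (hy : ∀ j, 0 < y j) :
    ∃ c : ℝ, 0 < c ∧ ∀ x : Fin r → ℝ, c * ∑ i, x i ^ 2 ≤ ∑ j, (A.mulVec x j) ^ 2 * y j := by
  obtain ⟨ε, hε, hεy⟩ : ∃ ε : ℝ, 0 < ε ∧ ∀ j, ε ≤ y j := by
    rcases isEmpty_or_nonempty (Fin r) with h | h
    · exact ⟨1, one_pos, fun j => h.elim j⟩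
    · obtain ⟨j, hj⟩ := Finite.exists_min y
      exact ⟨y j, hy j, hj⟩
  set K : ℝ := ∑ i, ∑ j, (A⁻¹ i j) ^ 2 + 1 with hK
  have hK0 : 0 < K := by positivity
  refine ⟨ε / K, by positivity, fun x => ?_⟩
  have h1 : ∑ i, x i ^ 2 ≤ K * ∑ j, (A.mulVec x j) ^ 2 := by
    have h2 : ∀ i, x i ^ 2 ≤ (∑ j, (A⁻¹ i j) ^ 2) * ∑ j, (A.mulVec x j) ^ 2 := by
      intro i
      have : x i = ∑ j, A⁻¹ i j * A.mulVec x j := by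
        have h3 : A⁻¹.mulVec (A.mulVec x) = x := by
          rw [Matrix.mulVec_mulVec, Matrix.nonsing_inv_mul _ (isUnit_iff_ne_zero.2 hA),
            Matrix.one_mulVec]
        conv_lhs => rw [← h3]
        rfl
      conv_lhs => rw [this]
      exact Finset.sum_mul_sq_le_sq_mul_sq _ _ _
    calc ∑ i, x i ^ 2 ≤ ∑ i, (∑ j, (A⁻¹ i j) ^ 2) * ∑ j, (A.mulVec x j) ^ 2 :=
          Finset.sum_le_sum fun i _ => h2 i
      _ = (∑ i, ∑ j, (A⁻¹ i j) ^ 2) * ∑ j, (A.mulVec x j) ^ 2 := by rw [Finset.sum_mul]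
      _ ≤ K * ∑ j, (A.mulVec x j) ^ 2 := by
          gcongr
          linarith
  calc ε / K * ∑ i, x i ^ 2 ≤ ε / K * (K * ∑ j, (A.mulVec x j) ^ 2) := by gcongr
    _ = ∑ j, (A.mulVec x j) ^ 2 * ε := by
      rw [← Finset.sum_mul]; field_simp
    _ ≤ _ := by
      gcongr with j
      exact hεy j

lemma aux_norm {r : ℕ} (t : Fin r → ℝ) (z : Fin r → ℂ) :
    ‖cexp ((Real.pi : ℂ) * I * ∑ j, (t j : ℂ) ^ 2 * z j)‖
      = Real.exp (-(Real.pi * ∑ j, t j ^ 2 * (z j).im)) := by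
  rw [Complex.norm_exp]
  congr 1
  have : ((Real.pi : ℂ) * I * ∑ j, (t j : ℂ) ^ 2 * z j).re
      = -(Real.pi * (∑ j, (t j : ℂ) ^ 2 * z j).im) := by
    simp [Complex.mul_re]
  rw [this, Complex.im_sum]
  congr 2
  refine Finset.sum_congr rfl fun j _ => ?_
  rw [← Complex.ofReal_pow, Complex.im_ofReal_mul]

lemma aux_summable_gauss (c : ℝ) (hc : 0 < c) :
    Summable fun n : ℤ => Real.exp (-(c * (n : ℝ) ^ 2)) := by
  have := ((summable_jacobiTheta₂_term_iff 0 ((c / Real.pi : ℝ) * I)).2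
    (by simp; positivity)).norm
  refine this.congr fun n => ?_
  rw [norm_jacobiTheta₂_term]
  congr 1
  simp
  field_simp

lemma aux_bound {r : ℕ} (A : Matrix (Fin r) (Fin r) ℝ) (hA : A.det ≠ 0) (z : Fin r → ℂ)
    (hz : ∀ j, 0 < (z j).im) (R : ℝ) :
    ∃ u : (Fin r → ℤ) → ℝ, Summable u ∧ ∀ x : Fin r → ℝ, ‖x‖ ≤ R →
      ∀ n : Fin r → ℤ, ‖cexp ((Real.pi : ℂ) * I *
        ∑ j, ((A.mulVec (x + fun i => (n i : ℝ)) j : ℝ) : ℂ) ^ 2 * z j)‖ ≤ u n := by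
  obtain ⟨c, hc, h⟩ := aux_posdef A hA (fun j => (z j).im) hz
  have hs := aux_summable_pi r _ (fun n => (Real.exp_pos _).le)
    (aux_summable_gauss (Real.pi * c / 2) (by positivity))
  refine ⟨_, hs.mul_left (Real.exp (Real.pi * c * (r * R ^ 2))), fun x hx n => ?_⟩
  rw [aux_norm, ← Real.exp_sum, ← Real.exp_add]
  refine Real.exp_le_exp.2 ?_
  have h1 := h (x + fun i => (n i : ℝ))
  have h2 : ∑ i, ((n i : ℝ) ^ 2 / 2 - R ^ 2) ≤ ∑ i, (x + fun i => (n i : ℝ)) i ^ 2 := by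
    refine Finset.sum_le_sum fun i _ => ?_
    have h3 : |x i| ≤ R := (norm_le_pi_norm x i).trans hx
    have h4 : x i ^ 2 ≤ R ^ 2 := sq_le_sq' (abs_le.1 h3).1 (abs_le.1 h3).2
    simp only [Pi.add_apply]
    nlinarith [sq_nonneg (2 * x i + n i)]
  have h5 := h1.trans' (mul_le_mul_of_nonneg_left h2 hc.le)
  have h6 := mul_le_mul_of_nonneg_left h5 Real.pi_pos.le
  rw [Finset.sum_sub_distrib, ← Finset.sum_div] at h6
  simp only [Finset.sum_const, Finset.card_univ, Fintype.card_fin, nsmul_eq_mul] at h6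
  rw [Finset.sum_neg_distrib, ← Finset.mul_sum]
  linarith

lemma aux_summable {r : ℕ} (A : Matrix (Fin r) (Fin r) ℝ) (hA : A.det ≠ 0) (z : Fin r → ℂ)
    (hz : ∀ j, 0 < (z j).im) : Summable fun n : Fin r → ℤ => cexp ((Real.pi : ℂ) * I *
        ∑ j, ((A.mulVec (fun i => (n i : ℝ)) j : ℝ) : ℂ) ^ 2 * z j) := by
  obtain ⟨u, hu, h⟩ := aux_bound A hA z hz 0
  refine Summable.of_norm_bounded hu fun n => ?_
  simpa using h 0 (by simp) n

lemma aux_im (z : ℂ) (hz : 0 < z.im) : 0 < (-1 / z).im := by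
  have h0 : z ≠ 0 := by rintro rfl; simp at hz
  rw [neg_div, one_div, Complex.neg_im, Complex.inv_im, neg_div, neg_neg]
  exact div_pos hz (Complex.normSq_pos.2 h0)

lemma aux_comp {r : ℕ} (A : Matrix (Fin r) (Fin r) ℝ) (hA : A.det ≠ 0) (H : (Fin r → ℝ) → ℂ)
    (hH : Continuous H) :
    ∫ x, H (A.mulVec x) = ((|A.det|⁻¹ : ℝ) : ℂ) * ∫ y, H y := by
  have hm := Real.map_matrix_volume_pi_eq_smul_volume_pi hA
  have hc : Continuous (Matrix.toLin' A) := LinearMap.continuous_of_finiteDimensional _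
  have := MeasureTheory.integral_map (μ := MeasureTheory.volume) (φ := Matrix.toLin' A)
    hc.measurable.aemeasurable (f := H) hH.aestronglyMeasurable
  rw [hm, MeasureTheory.integral_smul_measure] at this
  simp only [Matrix.toLin'_apply] at this
  rw [← this, ENNReal.toReal_ofReal (abs_nonneg _), abs_inv, Complex.real_smul]

lemma aux_comp_int {r : ℕ} (A : Matrix (Fin r) (Fin r) ℝ) (hA : A.det ≠ 0)
    (H : (Fin r → ℝ) → ℂ) (hH : Continuous H) (hi : MeasureTheory.Integrable H) :
    MeasureTheory.Integrable (fun x => H (A.mulVec x)) := by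
  have hm := Real.map_matrix_volume_pi_eq_smul_volume_pi hA
  have hc : Continuous (Matrix.toLin' A) := LinearMap.continuous_of_finiteDimensional _
  have := MeasureTheory.integrable_map_measure (μ := MeasureTheory.volume) (f := Matrix.toLin' A)
    (g := H) hH.aestronglyMeasurable hc.measurable.aemeasurable
  rw [hm] at this
  exact this.1 (hi.smul_measure ENNReal.ofReal_ne_top)

theorem aux_theta {r : ℕ} (A : Matrix (Fin r) (Fin r) ℝ) (hA : A.det ≠ 0) (z : Fin r → ℂ)
    (hz : ∀ j, 0 < (z j).im) :
    ∑' n : Fin r → ℤ, cexp ((Real.pi : ℂ) * I *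
        ∑ j, ((A.mulVec (fun i => (n i : ℝ)) j : ℝ) : ℂ) ^ 2 * z j)
    = (∏ j, (-I * z j) ^ (-(1 / 2) : ℂ)) * ((|A.det|⁻¹ : ℝ) : ℂ) *
      ∑' m : Fin r → ℤ, cexp ((Real.pi : ℂ) * I *
        ∑ j, ((A⁻¹.transpose.mulVec (fun i => (m i : ℝ)) j : ℝ) : ℂ) ^ 2 * (-1 / z j)) := by
  have hpi : (Real.pi : ℂ) ≠ 0 := by exact_mod_cast Real.pi_ne_zero
  have hz0 : ∀ j, z j ≠ 0 := by
    intro j h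
    have := hz j
    simp [h] at this
  set b : Fin r → ℂ := fun j => -(Real.pi * I * z j) with hb
  have hbre : ∀ j, 0 < (b j).re := by
    intro j
    have : (b j).re = Real.pi * (z j).im := by simp [hb, Complex.mul_re]
    rw [this]
    exact mul_pos Real.pi_pos (hz j)
  set H : (Fin r → ℂ) → (Fin r → ℝ) → ℂ := fun c v =>
    cexp (-∑ i, b i * (v i : ℂ) ^ 2 + ∑ i, c i * v i) with hHdef
  have hHc : ∀ c, Continuous (H c) := fun c => by simp only [hHdef]; fun_prop
  set f : (Fin r → ℝ) → ℂ := fun x => cexp ((Real.pi : ℂ) * I *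
        ∑ j, ((A.mulVec x j : ℝ) : ℂ) ^ 2 * z j) with hf
  have hfH : ∀ x, f x = H 0 (A.mulVec x) := by
    intro x
    simp only [hf, hHdef, hb, Finset.mul_sum]
    congr 1
    simp only [Pi.zero_apply, zero_mul, Finset.sum_const_zero, add_zero, ← Finset.sum_neg_distrib]
    refine Finset.sum_congr rfl fun j _ => ?_
    ring
  let w : (Fin r → ℤ) → Fin r → ℝ := fun m => A⁻¹.transpose.mulVec (fun i => (m i : ℝ))
  have hdot : ∀ m x, ∑ i, (m i : ℝ) * x i = ∑ j, w m j * A.mulVec x j := by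
    intro m x
    have : w m ⬝ᵥ A.mulVec x = (fun i => (m i : ℝ)) ⬝ᵥ x := by
      simp only [w]
      rw [Matrix.mulVec_transpose, ← Matrix.dotProduct_mulVec, Matrix.mulVec_mulVec,
        Matrix.nonsing_inv_mul _ (isUnit_iff_ne_zero.2 hA), Matrix.one_mulVec]
    exact this.symm
  have hEf : ∀ (m : Fin r → ℤ) x, cexp (∑ i, -(2 * Real.pi * I * m i) * x i) * f x
      = H (fun j => -(2 * Real.pi * I * w m j)) (A.mulVec x) := by
    intro m x
    rw [hfH]
    simp only [hHdef]
    rw [← Complex.exp_add]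
    congr 1
    simp only [Pi.zero_apply, zero_mul, Finset.sum_const_zero, add_zero]
    rw [add_comm]
    congr 1
    have := congrArg (fun t : ℝ => -(2 * Real.pi * I) * (t : ℂ)) (hdot m x)
    push_cast at this
    rw [Finset.mul_sum, Finset.mul_sum] at this
    convert this using 2 <;> ring
  have hFT : ∀ m : Fin r → ℤ, ∫ x : Fin r → ℝ, cexp (∑ i, -(2 * Real.pi * I * m i) * x i) * f x
      = (∏ j, (-I * z j) ^ (-(1 / 2) : ℂ)) * ((|A.det|⁻¹ : ℝ) : ℂ) *
        cexp ((Real.pi : ℂ) * I * ∑ j, ((w m j : ℝ) : ℂ) ^ 2 * (-1 / z j)) := by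
    intro m
    simp only [hEf]
    rw [aux_comp A hA _ (hHc _)]
    simp only [hHdef]
    rw [GaussianFourier.integral_cexp_neg_sum_mul_add hbre, Finset.prod_mul_distrib,
      ← Complex.exp_sum, Finset.mul_sum]
    have e1 : ∀ j, ((Real.pi : ℂ) / b j) ^ (1 / 2 : ℂ) = (-I * z j) ^ (-(1 / 2) : ℂ) := by
      intro j
      have h1 : (Real.pi : ℂ) / b j = (-I * z j)⁻¹ := by
        simp only [hb]
        have := hz0 j
        field_simp
      have h2 : (-I * z j).arg ≠ Real.pi := by
        intro h
        have h3 := (Complex.arg_eq_pi_iff.1 h).1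
        simp [Complex.mul_re] at h3
        linarith [hz j]
      rw [h1, Complex.inv_cpow _ _ h2, Complex.cpow_neg]
    have e2 : ∀ j, (-(2 * Real.pi * I * w m j)) ^ 2 / (4 * b j)
        = (Real.pi : ℂ) * I * (((w m j : ℝ) : ℂ) ^ 2 * (-1 / z j)) := by
      intro j
      simp only [hb]
      have := hz0 j
      field_simp
      ring_nf
    simp only [e1, e2]
    ring
  have hmain := aux_poisson f ?_ ?_ ?_ ?_
  · simp only [hFT] at hmain
    rw [tsum_mul_left] at hmain
    exact hmain
  · have : f = fun x => H 0 (A.mulVec x) := funext hfH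
    rw [this]
    exact (hHc 0).comp (LinearMap.continuous_of_finiteDimensional (Matrix.toLin' A))
  · have : f = fun x => H 0 (A.mulVec x) := funext hfH
    rw [this]
    exact aux_comp_int A hA _ (hHc 0) (GaussianFourier.integrable_cexp_neg_sum_mul_add hbre 0)
  · exact aux_bound A hA z hz
  · simp only [hFT]
    refine Summable.mul_left _ ?_
    refine aux_summable A⁻¹.transpose ?_ _ (fun j => aux_im _ (hz j))
    rw [Matrix.det_transpose, Matrix.det_nonsing_inv]
    simpa using hA

lemma aux_trace {F : Type*} [Field F] [NumberField F] {r : ℕ} (σ : Fin r → (F →+* ℝ))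
    (hσ : Function.Bijective (fun i : Fin r => (Complex.ofRealHom.comp (σ i) : F →+* ℂ)))
    (x : F) : ((Algebra.trace ℚ F x : ℚ) : ℝ) = ∑ j, σ j x := by
  have h := trace_eq_sum_embeddings (K := ℚ) (L := F) ℂ (x := x)
  have e : Fin r ≃ (F →ₐ[ℚ] ℂ) := (Equiv.ofBijective _ hσ).trans (RingHom.equivRatAlgHom F ℂ)
  have h2 := Fintype.sum_equiv ((Equiv.ofBijective _ hσ).trans (RingHom.equivRatAlgHom F ℂ))
    (fun j => ((σ j x : ℝ) : ℂ)) (fun φ => φ x) (fun j => rfl)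
  rw [← h2] at h
  apply Complex.ofReal_injective
  rw [Complex.ofReal_sum, ← h]
  simp

lemma aux_card {F : Type*} [Field F] [NumberField F] {r : ℕ} (σ : Fin r → (F →+* ℝ))
    (hσ : Function.Bijective (fun i : Fin r => (Complex.ofRealHom.comp (σ i) : F →+* ℂ)))
    : Fintype.card (Module.Free.ChooseBasisIndex ℤ (𝓞 F)) = Fintype.card (Fin r) := by
  rw [← Module.finrank_eq_card_chooseBasisIndex, RingOfIntegers.rank, ← Embeddings.card F ℂ]
  exact (Fintype.card_of_bijective hσ).symm

lemma aux_det {F : Type*} [Field F] [NumberField F] {r : ℕ} (σ : Fin r → (F →+* ℝ))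
    (hσ : Function.Bijective (fun i : Fin r => (Complex.ofRealHom.comp (σ i) : F →+* ℂ)))
    (e : Module.Free.ChooseBasisIndex ℤ (𝓞 F) ≃ Fin r) :
    (Matrix.of fun j i => σ j ((RingOfIntegers.basis F).reindex e i : F)).det ^ 2
      = (discr F : ℝ) := by
  have h := Algebra.discr_eq_det_embeddingsMatrixReindex_pow_two ℚ ℂ
    (((integralBasis F).reindex e : Module.Basis (Fin r) ℚ F))
    ((Equiv.ofBijective _ hσ).trans (RingHom.equivRatAlgHom F ℂ))
  have h1 : Algebra.discr ℚ ((integralBasis F).reindex e) = (discr F : ℚ) := by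
    rw [coe_discr, Module.Basis.coe_reindex]
    exact Algebra.discr_reindex ℚ (integralBasis F) e
  have h2 : Algebra.embeddingsMatrixReindex ℚ ℂ ((integralBasis F).reindex e)
      ((Equiv.ofBijective _ hσ).trans (RingHom.equivRatAlgHom F ℂ)) =
      ((Matrix.of fun j i => σ j ((RingOfIntegers.basis F).reindex e i : F)).map
        Complex.ofRealHom).transpose := by
    ext i j
    simp [Algebra.embeddingsMatrixReindex, Algebra.embeddingsMatrix, integralBasis_apply]
  rw [h1, h2, Matrix.det_transpose, ← RingHom.mapMatrix_apply, ← RingHom.map_det] at h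
  apply Complex.ofReal_injective
  simpa using h.symm

lemma aux_dual {F : Type*} [Field F] [NumberField F] (δ : 𝓞 F) (hδ : differentIdeal ℤ (𝓞 F) = Ideal.span {δ}) (x : F) :
    (∀ y : 𝓞 F, ∃ n : ℤ, (n : ℚ) = Algebra.trace ℚ F (x * y)) ↔ ∃ v : 𝓞 F, x = v / δ := by
  have h := coeIdeal_differentIdeal ℤ ℚ F (𝓞 F)
  rw [hδ, FractionalIdeal.coeIdeal_span_singleton, eq_comm, inv_eq_iff_eq_inv,
    FractionalIdeal.spanSingleton_inv] at h
  have h2 : x ∈ FractionalIdeal.dual ℤ ℚ (1 : FractionalIdeal (nonZeroDivisors (𝓞 F)) F) ↔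
    ∃ v : 𝓞 F, x = v / δ := by
    rw [h, FractionalIdeal.mem_spanSingleton]
    refine exists_congr fun v => ?_
    rw [Algebra.smul_def, div_eq_mul_inv, eq_comm]
  rw [← h2, FractionalIdeal.mem_dual (one_ne_zero' (FractionalIdeal (nonZeroDivisors (𝓞 F)) F))]
  constructor
  · intro H a ha
    obtain ⟨y, rfl⟩ := (FractionalIdeal.mem_one_iff _).1 ha
    obtain ⟨n, hn⟩ := H y
    exact ⟨n, by simpa [Algebra.traceForm_apply] using hn⟩
  · intro H y
    obtain ⟨n, hn⟩ := H y ((FractionalIdeal.mem_one_iff _).2 ⟨y, rfl⟩)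
    exact ⟨n, by simpa [Algebra.traceForm_apply] using hn⟩

lemma aux_exists {F : Type*} [Field F] [NumberField F] {r : ℕ}
    (e : Module.Free.ChooseBasisIndex ℤ (𝓞 F) ≃ Fin r) (m : Fin r → ℤ) :
    ∃ x : F, ∀ i, Algebra.trace ℚ F (x * ((RingOfIntegers.basis F).reindex e i : F)) = m i := by
  let b := (integralBasis F).reindex e
  let b' := (Algebra.traceForm ℚ F).dualBasis (traceForm_nondegenerate ℚ F) b
  refine ⟨∑ k, (m k : ℚ) • b' k, fun i => ?_⟩
  have hb : ((RingOfIntegers.basis F).reindex e i : F) = b i := by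
    simp [b, integralBasis_apply]
  rw [hb, ← Algebra.traceForm_apply]
  simp only [map_sum, map_smul, LinearMap.sum_apply, LinearMap.smul_apply]
  simp only [b', LinearMap.BilinForm.apply_dualBasis_left]
  simp

/-- Transformation formula for the theta series of a totally real number field
`F` of degree `r` with real embeddings `σ₁, …, σ_r`: if `δ ∈ 𝓞 F` generates the
different ideal of `F/ℚ` and `D_F > 0` is the discriminant, then for any tuple
`z` in the product of upper half-planes, with `w_j = -1/(σ_j(δ)² z_j)` one has
`θ_F(z) = (∏_j (-i z_j)^{-1/2}) · D_F^{-1/2} · θ_F(w)` (principal branch powers),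
and `w` again lies in the product of upper half-planes. -/
theorem theta_series_transformation
    (F : Type*) [Field F] [NumberField F] (r : ℕ)
    (σ : Fin r → (F →+* ℝ))
    (hσ : Function.Bijective
      (fun i : Fin r => (Complex.ofRealHom.comp (σ i) : F →+* ℂ)))
    (δ : 𝓞 F) (hδ : differentIdeal ℤ (𝓞 F) = Ideal.span {δ})
    (hD : 0 < NumberField.discr F)
    (z : Fin r → ℂ) (hz : ∀ j, 0 < (z j).im) :
    (∀ j, 0 < ((-1) / ((σ j (δ : F) : ℂ) ^ 2 * z j)).im) ∧
    (∑' v : 𝓞 F, Complex.exp ((Real.pi : ℂ) * Complex.I *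
        ∑ j, ((σ j (v : F) : ℂ)) ^ 2 * z j))
      = (∏ j, (-Complex.I * z j) ^ (-(1 / 2) : ℂ)) *
          ((NumberField.discr F : ℂ) ^ (-(1 / 2) : ℂ)) *
        (∑' v : 𝓞 F, Complex.exp ((Real.pi : ℂ) * Complex.I *
          ∑ j, ((σ j (v : F) : ℂ)) ^ 2 *
            ((-1) / ((σ j (δ : F) : ℂ) ^ 2 * z j)))) := by
  have hδ0 : (δ : F) ≠ 0 := by
    intro h
    have h1 : δ = 0 := by exact_mod_cast h
    have h2 := differentIdeal_ne_bot (A := ℤ) (B := 𝓞 F)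
    rw [hδ, h1] at h2
    simp at h2
  have hσδ : ∀ j, σ j (δ : F) ≠ 0 := fun j => (map_ne_zero (σ j)).2 hδ0
  refine ⟨fun j => ?_, ?_⟩
  · refine aux_im _ ?_
    rw [← Complex.ofReal_pow, Complex.im_ofReal_mul]
    have := hσδ j
    have := hz j
    positivity
  let e := Fintype.equivOfCardEq (aux_card σ hσ)
  let b := (RingOfIntegers.basis F).reindex e
  let A : Matrix (Fin r) (Fin r) ℝ := Matrix.of fun j i => σ j (b i : F)
  have hdet : A.det ^ 2 = (discr F : ℝ) := aux_det σ hσ e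
  have hDR : (0 : ℝ) < discr F := by exact_mod_cast hD
  have hA : A.det ≠ 0 := by
    intro h
    rw [h] at hdet
    norm_num at hdet
    exact hDR.ne (by exact_mod_cast hdet)
  have hU : IsUnit A.det := isUnit_iff_ne_zero.2 hA
  have hconst : ((|A.det|⁻¹ : ℝ) : ℂ) = (discr F : ℂ) ^ (-(1 / 2) : ℂ) := by
    have h1 : |A.det| = (discr F : ℝ) ^ (1 / 2 : ℝ) := by
      rw [← Real.sqrt_eq_rpow, ← hdet, Real.sqrt_sq_eq_abs]
    rw [h1, ← Real.rpow_neg hDR.le, Complex.ofReal_cpow hDR.le]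
    push_cast
    rfl
  have hth := aux_theta A hA z hz
  rw [hconst] at hth
  -- left-hand side
  have hL : ∀ v : 𝓞 F, ∀ j, A.mulVec (fun i => ((b.equivFun v i : ℤ) : ℝ)) j = σ j (v : F) := by
    intro v j
    conv_rhs => rw [← b.sum_equivFun v]
    simp [Matrix.mulVec, dotProduct, A, mul_comm]
  -- the dual bijection
  have htr : ∀ v : 𝓞 F, ∀ i, ∃ n : ℤ, (n : ℚ) = Algebra.trace ℚ F ((v / δ : F) * b i) := fun v i =>
    (aux_dual δ hδ _).2 ⟨v, rfl⟩ (b i)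
  choose M hM using htr
  have hMA : ∀ v : 𝓞 F, (fun i => (M v i : ℝ)) = A.transpose.mulVec (fun j => σ j (v / δ : F)) := by
    intro v
    ext i
    have h1 : ((M v i : ℚ) : ℝ) = _ := (congrArg (fun q : ℚ => (q : ℝ)) (hM v i)).trans
      (aux_trace σ hσ _)
    rw [Rat.cast_intCast] at h1
    rw [h1]
    simp only [Matrix.mulVec, dotProduct, A, Matrix.transpose_apply, Matrix.of_apply, map_mul]
    exact Finset.sum_congr rfl fun j _ => mul_comm _ _
  have hR : ∀ v : 𝓞 F, A⁻¹.transpose.mulVec (fun i => (M v i : ℝ)) = fun j => σ j (v / δ : F) := by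
    intro v
    rw [hMA, Matrix.mulVec_mulVec, ← Matrix.transpose_mul, Matrix.mul_nonsing_inv _ hU,
      Matrix.transpose_one, Matrix.one_mulVec]
  have hr : 0 < r := by
    rcases Nat.eq_zero_or_pos r with h | h
    · subst h
      obtain ⟨i, -⟩ := hσ.2 (Classical.arbitrary _)
      exact i.elim0
    · exact h
  have hMbij : Function.Bijective M := by
    constructor
    · intro v w hvw
      have h1 := congrFun ((hR v).symm.trans ((congrArg (fun m : Fin r → ℤ =>
        A⁻¹.transpose.mulVec (fun i => (m i : ℝ))) hvw).trans (hR w))) ⟨0, hr⟩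
      have h2 := (σ ⟨0, hr⟩).injective h1
      have h3 : (v : F) = w := by field_simp at h2; exact h2
      exact_mod_cast h3
    · intro m
      obtain ⟨x, hx⟩ := aux_exists e m
      obtain ⟨v, hv⟩ := (aux_dual δ hδ x).1 (by
        intro y
        refine ⟨∑ i, b.equivFun y i * m i, ?_⟩
        conv_rhs => rw [← b.sum_equivFun y]
        push_cast
        simp only [← hx]
        rw [Finset.mul_sum, map_sum]
        refine Finset.sum_congr rfl fun i _ => ?_
        rw [mul_smul_comm, map_zsmul, zsmul_eq_mul])
      refine ⟨v, funext fun i => ?_⟩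
      have h1 := (hM v i).trans ((congrArg (fun t => Algebra.trace ℚ F (t * (b i : F))) hv.symm).trans (hx i))
      exact_mod_cast h1
  rw [← b.equivFun.toEquiv.tsum_eq, ← (Equiv.ofBijective M hMbij).tsum_eq (fun m : Fin r → ℤ => cexp ((Real.pi : ℂ) * I *
        ∑ j, ((A⁻¹.transpose.mulVec (fun i => (m i : ℝ)) j : ℝ) : ℂ) ^ 2 * (-1 / z j)))] at hth
  simp only [LinearEquiv.coe_toEquiv, hL, Equiv.ofBijective_apply, hR] at hth
  rw [hth]
  congr 1
  refine tsum_congr fun v => ?_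
  congr 2
  refine Finset.sum_congr rfl fun j _ => ?_
  have h1 : (σ j (δ : F) : ℂ) ≠ 0 := by exact_mod_cast hσδ j
  have h2 : z j ≠ 0 := by
    intro h
    have := hz j
    simp [h] at this
  rw [map_div₀]
  push_cast
  field_simp
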